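/- For n ≥ 6 with n ≡ 1 (mod 4), writing d_n(q) = ∑_{k=1}^{β_n} A_n(k) q^k with β_n = binom(n,2) - 1 and r = n(n-1)/4, the sequence A_n(k)/A_n(β_n + 1 - k) for k = 1, ..., r-1 is strictly increasing, and A_n(r-1)/A_n(r+1) < 1. -/

import Mathlib

open Polynomial

/-- The q-derangement polynomial, defined by the recursion
`d_n(q) = (1+q+⋯+q^{n-1}) d_{n-1}(q) + (-1)^n q^{C(n,2)}` for `n ≥ 2`, with `d_1(q) = 0`. -/
noncomputable def dq : ℕ → Polynomial ℤ
  | 0 => 0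
  | 1 => 0
  | (n + 2) =>
      (∑ i ∈ Finset.range (n + 2), X ^ i) * dq (n + 1)
        + (-1) ^ (n + 2) * X ^ ((n + 2).choose 2)

/-- `A n k` is the coefficient of `q^k` in `d_n(q)`. -/
noncomputable def A (n k : ℕ) : ℤ := (dq n).coeff k

/-- Window sum of width `m` ending at `k`. -/
noncomputable def win (m : ℕ) (f : ℤ → ℤ) (k : ℤ) : ℤ := ∑ s ∈ Finset.Ioc (k - m) k, f s

/-- Weak likelihood-ratio condition between `f` and its reversal, with support in `[1, N-1]`. -/
def Weak (f : ℤ → ℤ) (N : ℤ) : Prop :=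
  (∀ i, 0 ≤ f i) ∧ (∀ i, i ≤ 0 → f i = 0) ∧ (∀ i, N ≤ i → f i = 0) ∧
  (∀ i j, i < j → f i * f (N - j) ≤ f j * f (N - i))

/-- Strict adjacent version. -/
def Strict (f : ℤ → ℤ) (N : ℤ) : Prop :=
  ∀ k, 1 ≤ k → k ≤ N - 2 → f k * f (N - (k + 1)) < f (k + 1) * f (N - k)

theorem win_rev (m : ℕ) (f : ℤ → ℤ) (N k : ℤ) :
    win m f (N + m - 1 - k) = win m (fun s => f (N - s)) k := by
  unfold win
  refine Finset.sum_bij' (fun s _ => N - s) (fun s _ => N - s) ?_ ?_ ?_ ?_ ?_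
  · intro s hs
    simp only [Finset.mem_Ioc] at *
    omega
  · intro s hs
    simp only [Finset.mem_Ioc] at *
    omega
  · intro s hs
    ring
  · intro s hs
    ring
  · intro s hs
    congr 1
    ring

theorem pair_le (f g : ℤ → ℤ) (U V : Finset ℤ)
    (h : ∀ u ∈ U, ∀ v ∈ V, f u * g v ≤ f v * g u) :
    (∑ u ∈ U, f u) * (∑ v ∈ V, g v) ≤ (∑ v ∈ V, f v) * (∑ u ∈ U, g u) := by
  rw [Finset.sum_mul_sum, Finset.sum_mul_sum, Finset.sum_comm (s := V)]
  exact Finset.sum_le_sum fun u hu => Finset.sum_le_sum fun v hv => h u hu v hv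

theorem pair_lt (f g : ℤ → ℤ) (U V : Finset ℤ)
    (h : ∀ u ∈ U, ∀ v ∈ V, f u * g v ≤ f v * g u)
    (u0 v0 : ℤ) (hu0 : u0 ∈ U) (hv0 : v0 ∈ V) (h0 : f u0 * g v0 < f v0 * g u0) :
    (∑ u ∈ U, f u) * (∑ v ∈ V, g v) < (∑ v ∈ V, f v) * (∑ u ∈ U, g u) := by
  rw [Finset.sum_mul_sum, Finset.sum_mul_sum, Finset.sum_comm (s := V)]
  refine Finset.sum_lt_sum (fun u hu => Finset.sum_le_sum fun v hv => h u hu v hv)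
    ⟨u0, hu0, Finset.sum_lt_sum (fun v hv => h u0 hu0 v hv) ⟨v0, hv0, h0⟩⟩

theorem sum_Ioc_split (f : ℤ → ℤ) (a b c : ℤ) (h1 : a ≤ b) (h2 : b ≤ c) :
    ∑ s ∈ Finset.Ioc a c, f s = ∑ s ∈ Finset.Ioc a b, f s + ∑ s ∈ Finset.Ioc b c, f s := by
  rw [← Finset.Ioc_union_Ioc_eq_Ioc h1 h2, Finset.sum_union]
  rw [Finset.disjoint_left]
  intro x hx hy
  simp only [Finset.mem_Ioc] at *
  omega

theorem win_weak (m : ℕ) (f : ℤ → ℤ) (N : ℤ) (h : Weak f N) : Weak (win m f) (N + m - 1) := by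
  obtain ⟨h0, h1, h2, h3⟩ := h
  refine ⟨?_, ?_, ?_, ?_⟩
  · intro i
    exact Finset.sum_nonneg fun s _ => h0 s
  · intro i hi
    refine Finset.sum_eq_zero fun s hs => h1 s ?_
    simp only [Finset.mem_Ioc] at hs
    omega
  · intro i hi
    refine Finset.sum_eq_zero fun s hs => h2 s ?_
    simp only [Finset.mem_Ioc] at hs
    omega
  · intro i j hij
    rw [win_rev, win_rev]
    unfold win
    by_cases hc : i ≤ j - m
    · refine pair_le f (fun s => f (N - s)) _ _ ?_
      intro u hu v hv
      simp only [Finset.mem_Ioc] at hu hv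
      exact h3 u v (by omega)
    · have e1 := fun g : ℤ → ℤ => sum_Ioc_split g (i - m) (j - m) i (by omega) (by omega)
      have e2 := fun g : ℤ → ℤ => sum_Ioc_split g (j - m) i j (by omega) (by omega)
      rw [e1, e1, e2, e2]
      have p1 := pair_le f (fun s => f (N - s)) (Finset.Ioc (i - m) (j - m)) (Finset.Ioc (j - m) i)
        (by
          intro u hu v hv
          simp only [Finset.mem_Ioc] at hu hv
          exact h3 u v (by omega))
      have p2 := pair_le f (fun s => f (N - s)) (Finset.Ioc (i - m) (j - m)) (Finset.Ioc i j)
        (by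
          intro u hu v hv
          simp only [Finset.mem_Ioc] at hu hv
          exact h3 u v (by omega))
      have p3 := pair_le f (fun s => f (N - s)) (Finset.Ioc (j - m) i) (Finset.Ioc i j)
        (by
          intro u hu v hv
          simp only [Finset.mem_Ioc] at hu hv
          exact h3 u v (by omega))
      linarith

theorem win_strict (m : ℕ) (f : ℤ → ℤ) (N : ℤ) (hm : 2 ≤ m) (hmN : (m : ℤ) ≤ N - 1)
    (h : Weak f N) (hs : Strict f N) : Strict (win m f) (N + m - 1) := by
  obtain ⟨h0, h1, h2, h3⟩ := h
  intro k hk1 hk2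
  rw [win_rev, win_rev]
  unfold win
  have e1 := fun g : ℤ → ℤ => sum_Ioc_split g (k - m) (k + 1 - m) k (by omega) (by omega)
  have e2 := fun g : ℤ → ℤ => sum_Ioc_split g (k + 1 - m) k (k + 1) (by omega) (by omega)
  rw [e1, e1, e2, e2]
  have q1 : ∀ u ∈ Finset.Ioc (k - (m : ℤ)) (k + 1 - m), ∀ v ∈ Finset.Ioc (k + 1 - (m : ℤ)) k,
      f u * f (N - v) ≤ f v * f (N - u) := by
    intro u hu v hv
    simp only [Finset.mem_Ioc] at hu hv
    exact h3 u v (by omega)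
  have q3 : ∀ u ∈ Finset.Ioc (k + 1 - (m : ℤ)) k, ∀ v ∈ Finset.Ioc k (k + 1),
      f u * f (N - v) ≤ f v * f (N - u) := by
    intro u hu v hv
    simp only [Finset.mem_Ioc] at hu hv
    exact h3 u v (by omega)
  have p1 := pair_le f (fun s => f (N - s)) _ _ q1
  have p2 := pair_le f (fun s => f (N - s)) (Finset.Ioc (k - m) (k + 1 - m)) (Finset.Ioc k (k + 1))
    (by
      intro u hu v hv
      simp only [Finset.mem_Ioc] at hu hv
      exact h3 u v (by omega))
  have p3 := pair_le f (fun s => f (N - s)) _ _ q3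
  by_cases hc : k ≤ N - 2
  · have p3' := pair_lt f (fun s => f (N - s)) _ _ q3 k (k + 1)
      (by simp only [Finset.mem_Ioc]; omega) (by simp only [Finset.mem_Ioc]; omega) (hs k hk1 hc)
    linarith
  · have p1' := pair_lt f (fun s => f (N - s)) _ _ q1 (k + 1 - m) (k + 1 - m + 1)
      (by simp only [Finset.mem_Ioc]; omega) (by simp only [Finset.mem_Ioc]; omega)
      (hs (k + 1 - m) (by omega) (by omega))
    linarith

/-- Add one to the top coefficient. -/
def addTop (f : ℤ → ℤ) (N : ℤ) (k : ℤ) : ℤ := f k + if k = N - 1 then 1 else 0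

theorem addTop_ge (f : ℤ → ℤ) (N : ℤ) (hN : 2 ≤ N) (h : Weak f N) (i j : ℤ) (hij : i < j) :
    f j * f (N - i) - f i * f (N - j) ≤
      addTop f N j * addTop f N (N - i) - addTop f N i * addTop f N (N - j) := by
  obtain ⟨h0, h1, h2, h3⟩ := h
  have a : addTop f N i * addTop f N (N - j) = f i * f (N - j) := by
    unfold addTop
    by_cases c1 : i = N - 1
    · rw [h1 (N - j) (by omega), if_neg (show ¬ N - j = N - 1 by omega)]
      simp
    · by_cases c2 : N - j = N - 1
      · rw [h1 i (by omega), if_neg c1]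
        simp
      · rw [if_neg c1, if_neg c2]
        simp
  have b : f j * f (N - i) ≤ addTop f N j * addTop f N (N - i) := by
    have g : ∀ x, f x ≤ addTop f N x := by
      intro x
      unfold addTop
      split_ifs <;> simp
    exact mul_le_mul (g _) (g _) (h0 _) ((h0 _).trans (g _))
  linarith

theorem addTop_weak (f : ℤ → ℤ) (N : ℤ) (hN : 2 ≤ N) (h : Weak f N) : Weak (addTop f N) N := by
  have key := addTop_ge f N hN h
  obtain ⟨h0, h1, h2, h3⟩ := h
  refine ⟨?_, ?_, ?_, ?_⟩
  · intro i
    have := h0 i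
    unfold addTop
    split_ifs <;> omega
  · intro i hi
    have := h1 i hi
    unfold addTop
    rw [if_neg (by omega)]
    omega
  · intro i hi
    have := h2 i hi
    unfold addTop
    rw [if_neg (by omega)]
    omega
  · intro i j hij
    have := key i j hij
    have := h3 i j hij
    linarith

theorem addTop_strict (f : ℤ → ℤ) (N : ℤ) (hN : 2 ≤ N) (h : Weak f N) (hs : Strict f N) :
    Strict (addTop f N) N := by
  intro k hk1 hk2
  have := addTop_ge f N hN h k (k + 1) (by omega)
  have := hs k hk1 hk2
  linarith

/-- Coefficients indexed by integers. -/
noncomputable def cz (p : Polynomial ℤ) (k : ℤ) : ℤ := if 0 ≤ k then p.coeff k.toNat else 0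

theorem cz_nat (p : Polynomial ℤ) (k : ℕ) : cz p k = p.coeff k := by simp [cz]

theorem cz_add (p q : Polynomial ℤ) (k : ℤ) : cz (p + q) k = cz p k + cz q k := by
  unfold cz
  split_ifs <;> simp

theorem cz_X_mul (i : ℕ) (p : Polynomial ℤ) (k : ℤ) : cz (X ^ i * p) k = cz p (k - i) := by
  unfold cz
  rw [coeff_X_pow_mul']
  by_cases h : (i : ℤ) ≤ k
  · rw [if_pos (by omega), if_pos (by omega), if_pos (by omega)]
    congr 1
    omega
  · rw [if_neg (show ¬ 0 ≤ k - i by omega)]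
    split_ifs <;> first | rfl | omega

theorem cz_X (i : ℕ) (k : ℤ) : cz (X ^ i) k = if k = i then 1 else 0 := by
  unfold cz
  rw [coeff_X_pow]
  split_ifs <;> omega

theorem cz_win (m : ℕ) (p : Polynomial ℤ) :
    cz ((∑ i ∈ Finset.range m, X ^ i) * p) = win m (cz p) := by
  funext k
  induction m with
  | zero => simp [win, cz]
  | succ m ih =>
    rw [Finset.sum_range_succ, add_mul, cz_add, ih, cz_X_mul]
    unfold win
    have e := sum_Ioc_split (cz p) (k - (m + 1 : ℕ)) (k - m) k (by push_cast; omega) (by omega)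
    rw [e]
    have : Finset.Ioc (k - ((m + 1 : ℕ) : ℤ)) (k - m) = {k - (m : ℤ)} := by
      ext x
      simp only [Finset.mem_Ioc, Finset.mem_singleton]
      push_cast
      omega
    rw [this, Finset.sum_singleton]
    ring

theorem choose_odd (t : ℕ) : (2 * t + 1).choose 2 = t * (2 * t + 1) := by
  rw [Nat.choose_two_right]
  apply Nat.div_eq_of_eq_mul_left (by norm_num)
  simp
  ring

theorem choose_even (t : ℕ) : (2 * t + 2).choose 2 = (t + 1) * (2 * t + 1) := by
  rw [Nat.choose_two_right]
  apply Nat.div_eq_of_eq_mul_left (by norm_num)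
  simp
  ring

theorem dq_step (t : ℕ) : dq (2 * (t + 1) + 1) =
    (∑ i ∈ Finset.range (2 * t + 2), X ^ i) *
      ((∑ i ∈ Finset.range (2 * t + 3), X ^ i) * dq (2 * t + 1) + X ^ ((t + 1) * (2 * t + 1))) := by
  have e1 : dq (2 * (t + 1) + 1) = (∑ i ∈ Finset.range (2 * t + 3), X ^ i) * dq (2 * t + 2)
      + (-1) ^ (2 * t + 3) * X ^ ((2 * t + 3).choose 2) := by
    rw [show 2 * (t + 1) + 1 = (2 * t + 1) + 2 by ring, dq]
  have e2 : dq (2 * t + 2) = (∑ i ∈ Finset.range (2 * t + 2), X ^ i) * dq (2 * t + 1)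
      + (-1) ^ (2 * t + 2) * X ^ ((2 * t + 2).choose 2) := by
    rw [dq]
  have s1 : (-1 : Polynomial ℤ) ^ (2 * t + 2) = 1 := Even.neg_one_pow ⟨t + 1, by ring⟩
  have s2 : (-1 : Polynomial ℤ) ^ (2 * t + 3) = -1 := Odd.neg_one_pow ⟨t + 1, by ring⟩
  have c : (2 * t + 3).choose 2 = (2 * t + 2) + (t + 1) * (2 * t + 1) := by
    rw [← choose_even, Nat.choose_succ_succ' (2 * t + 2) 1, Nat.choose_one_right]
  rw [e1, e2, s1, s2, c, choose_even, Finset.sum_range_succ _ (2 * t + 2), pow_add X (2 * t + 2)]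
  ring

theorem cz_step (t : ℕ) : cz (dq (2 * (t + 1) + 1)) =
    win (2 * t + 2) (addTop (win (2 * t + 3) (cz (dq (2 * t + 1))))
      ((t : ℤ) * (2 * t + 1) + (2 * t + 3 : ℕ) - 1)) := by
  rw [dq_step, cz_win]
  congr 1
  funext k
  rw [cz_add, cz_win, cz_X, addTop]
  congr 1
  have : (((t + 1) * (2 * t + 1) : ℕ) : ℤ) = (t : ℤ) * (2 * t + 1) + (2 * t + 3 : ℕ) - 1 - 1 := by
    push_cast
    ring
  rw [this]

theorem dq_weak (t : ℕ) : Weak (cz (dq (2 * t + 1))) ((t : ℤ) * (2 * t + 1)) := by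
  induction t with
  | zero =>
    have : cz (dq (2 * 0 + 1)) = fun _ => 0 := by
      funext k
      simp [cz, dq]
    rw [this]
    simp [Weak]
  | succ t ih =>
    rw [cz_step]
    have h := win_weak (2 * t + 2) _ _ (addTop_weak _ _ (by
      have : 0 ≤ (t : ℤ) * (2 * t + 1) := by positivity
      push_cast
      omega) (win_weak (2 * t + 3) _ _ ih))
    convert h using 1
    push_cast
    ring

theorem dq_five : dq 5 = X + 3 * X ^ 2 + 5 * X ^ 3 + 7 * X ^ 4 + 8 * X ^ 5 + 8 * X ^ 6
    + 6 * X ^ 7 + 4 * X ^ 8 + 2 * X ^ 9 := by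
  have h := dq_step 1
  have h0 := dq_step 0
  have h1 : dq 1 = 0 := by simp [dq]
  norm_num [Finset.sum_range_succ, h1] at h h0
  rw [h, h0]
  ring

theorem dq_strict (t : ℕ) :
    Strict (cz (dq (2 * (t + 2) + 1))) (((t + 2 : ℕ) : ℤ) * (2 * (t + 2 : ℕ) + 1)) := by
  induction t with
  | zero =>
    intro k hk1 hk2
    norm_num at hk2 ⊢
    lift k to ℕ using by omega
    have hk3 : k ≤ 8 := by omega
    have hk4 : 1 ≤ k := by omega
    rw [show (10 : ℤ) - (k + 1) = ((9 - k : ℕ) : ℤ) by omega,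
      show (10 : ℤ) - k = ((10 - k : ℕ) : ℤ) by omega,
      show (k : ℤ) + 1 = ((k + 1 : ℕ) : ℤ) by omega, cz_nat, cz_nat, cz_nat, cz_nat, dq_five]
    interval_cases k <;>
      simp only [coeff_add, coeff_ofNat_mul, coeff_X_pow, coeff_X] <;> norm_num
  | succ t ih =>
    have hw := dq_weak (t + 2)
    rw [cz_step (t + 2)]
    have hN : (2 * (t + 2) + 3 : ℤ) ≤ ((t + 2 : ℕ) : ℤ) * (2 * (t + 2 : ℕ) + 1) - 1 := by
      push_cast
      nlinarith
    have hw1 := win_weak (2 * (t + 2) + 3) _ _ hw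
    have hs1 := win_strict (2 * (t + 2) + 3) _ _ (by omega) (by push_cast at *; omega) hw ih
    have hw2 := addTop_weak _ _ (by push_cast at *; omega) hw1
    have hs2 := addTop_strict _ _ (by push_cast at *; omega) hw1 hs1
    have hs3 := win_strict (2 * (t + 2) + 2) _ _ (by omega) (by push_cast at *; omega) hw2 hs2
    convert hs3 using 1
    push_cast
    ring

theorem stmt_14 (n : ℕ) (hn : 6 ≤ n) (hmod : n % 4 = 1) :
    (∀ k, 1 ≤ k → k + 1 ≤ n * (n - 1) / 4 - 1 →
      (A n k : ℚ) / (A n (n.choose 2 - 1 + 1 - k) : ℚ) <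
        (A n (k + 1) : ℚ) / (A n (n.choose 2 - 1 + 1 - (k + 1)) : ℚ)) ∧
    (A n (n * (n - 1) / 4 - 1) : ℚ) / (A n (n * (n - 1) / 4 + 1) : ℚ) < 1 := by
  obtain ⟨u, rfl⟩ : ∃ u, n = 4 * u + 9 := ⟨(n - 9) / 4, by omega⟩
  have hw := dq_weak (2 * u + 4)
  have hs := dq_strict (2 * u + 2)
  rw [show 2 * (2 * u + 2 + 2) + 1 = 4 * u + 9 by ring] at hs
  rw [show 2 * (2 * u + 4) + 1 = 4 * u + 9 by ring] at hw
  obtain ⟨r, hr⟩ : ∃ r, r = (u + 2) * (4 * u + 9) := ⟨_, rfl⟩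
  have hr4 : 4 ≤ r := by rw [hr]; nlinarith
  have e1 : (4 * u + 9) * (4 * u + 9 - 1) / 4 = r := by
    apply Nat.div_eq_of_eq_mul_left (by norm_num)
    rw [hr]
    simp
    ring
  have e2 : (4 * u + 9).choose 2 = 2 * r := by
    rw [show 4 * u + 9 = 2 * (2 * u + 4) + 1 by ring, choose_odd, hr]
    ring
  have e3 : ((2 * u + 2 + 2 : ℕ) : ℤ) * (2 * (2 * u + 2 + 2 : ℕ) + 1) = 2 * r := by
    rw [hr]
    push_cast
    ring
  rw [e3] at hs
  have hA : ∀ k : ℕ, cz (dq (4 * u + 9)) k = A (4 * u + 9) k := fun k => cz_nat _ k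
  have h0 : ∀ k : ℕ, 0 ≤ A (4 * u + 9) k := fun k => by
    rw [← hA]
    exact hw.1 _
  have key : ∀ k : ℕ, 1 ≤ k → k + 2 ≤ 2 * r →
      A (4 * u + 9) k * A (4 * u + 9) (2 * r - (k + 1)) <
        A (4 * u + 9) (k + 1) * A (4 * u + 9) (2 * r - k) := by
    intro k h1 h2
    have := hs k (by omega) (by omega)
    rw [show (2 * r : ℤ) - (k + 1) = ((2 * r - (k + 1) : ℕ) : ℤ) by omega,
      show (2 * r : ℤ) - k = ((2 * r - k : ℕ) : ℤ) by omega,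
      show (k : ℤ) + 1 = ((k + 1 : ℕ) : ℤ) by omega, hA, hA, hA, hA] at this
    exact this
  have pos : ∀ k : ℕ, 2 ≤ k → k + 1 ≤ 2 * r → 0 < A (4 * u + 9) k := by
    intro k h1 h2
    obtain ⟨j, rfl⟩ : ∃ j, k = j + 1 := ⟨k - 1, by omega⟩
    have := key j (by omega) (by omega)
    have h3 := mul_nonneg (h0 j) (h0 (2 * r - (j + 1)))
    refine lt_of_le_of_ne (h0 _) fun h => ?_
    rw [← h] at this
    linarith
  rw [e1, e2]
  constructor
  · intro k h1 h2
    rw [show 2 * r - 1 + 1 - k = 2 * r - k by omega,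
      show 2 * r - 1 + 1 - (k + 1) = 2 * r - (k + 1) by omega]
    have p1 := pos (2 * r - k) (by omega) (by omega)
    have p2 := pos (2 * r - (k + 1)) (by omega) (by omega)
    rw [div_lt_div_iff₀ (by exact_mod_cast p1) (by exact_mod_cast p2)]
    exact_mod_cast key k h1 (by omega)
  · have p := pos (r + 1) (by omega) (by omega)
    rw [div_lt_one (by exact_mod_cast p)]
    have := key (r - 1) (by omega) (by omega)
    rw [show r - 1 + 1 = r by omega, show 2 * r - r = r by omega,
      show 2 * r - (r - 1) = r + 1 by omega, mul_comm] at this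
    have := lt_of_mul_lt_mul_left this (h0 r)
    exact_mod_cast this
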